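/- Fix ρ ∈ (0,1) and α ∈ (0,1). Let (α_n) be a sequence in (0,1) with n·α_n → α and let c_n be defined by Φ(−c_n) = α_n. Then n·c_n·∫_{A_n} Φ(d(ρ,c_n,z))^{n−1}·φ(d(ρ,c_n,z))·φ(z) dz → 0 as n → ∞, where A_n = { z ∈ ℝ : Φ(−d(ρ,c_n,z)) < 1/(n·(log n)³) }. -/

import Mathlib

open MeasureTheory Filter

/-- The standard normal density. -/
noncomputable def phi (x : ℝ) : ℝ := (Real.sqrt (2 * Real.pi))⁻¹ * Real.exp (-x ^ 2 / 2)

/-- The standard normal cumulative distribution function. -/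
noncomputable def Phi (x : ℝ) : ℝ := ∫ t in Set.Iic x, phi t

/-- d(ρ,c,z) = (c + √ρ·z)/√(1−ρ). -/
noncomputable def dd (ρ c z : ℝ) : ℝ := (c + Real.sqrt ρ * z) / Real.sqrt (1 - ρ)

/-- G(ρ,c,z) = (c + z/√ρ)/(2(1−ρ)^{3/2}). -/
noncomputable def G (ρ c z : ℝ) : ℝ :=
  (c + z / Real.sqrt ρ) / (2 * (1 - ρ) ^ ((3 : ℝ) / 2))

/-- H_n(ρ,c) = ∫ Φ(d(ρ,c,z))^n φ(z) dz. -/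
noncomputable def Hn (n : ℕ) (ρ c : ℝ) : ℝ := ∫ z : ℝ, (Phi (dd ρ c z)) ^ n * phi z


lemma aux_phi_eq : phi = ProbabilityTheory.gaussianPDFReal 0 1 := by
  funext x; simp [phi, ProbabilityTheory.gaussianPDFReal]

lemma aux_phi_int : Integrable phi := by
  rw [aux_phi_eq]; exact ProbabilityTheory.integrable_gaussianPDFReal 0 1

lemma aux_phi_pos (x : ℝ) : 0 < phi x := by
  unfold phi; positivity

lemma aux_phi_total : ∫ x, phi x = 1 := by
  rw [aux_phi_eq]; exact ProbabilityTheory.integral_gaussianPDFReal_eq_one 0 (by simp)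

lemma aux_Phi_mono : Monotone Phi := by
  intro a b hab
  unfold Phi
  exact setIntegral_mono_set aux_phi_int.integrableOn
    (Eventually.of_forall fun x => (aux_phi_pos x).le)
    (Set.Iic_subset_Iic.2 hab).eventuallyLE

lemma aux_Phi_nonneg (x : ℝ) : 0 ≤ Phi x :=
  integral_nonneg fun x => (aux_phi_pos x).le

lemma aux_Phi_le_one (x : ℝ) : Phi x ≤ 1 := by
  rw [← aux_phi_total]
  exact setIntegral_le_integral aux_phi_int (Eventually.of_forall fun x => (aux_phi_pos x).le)

lemma aux_Phi_lower (c : ℝ) (hc : 0 ≤ c) : phi (c + 1) ≤ Phi (-c) := by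
  have h1 : ∫ t in Set.Icc (-c-1) (-c), phi (c+1) ≤ ∫ t in Set.Icc (-c-1) (-c), phi t := by
    apply setIntegral_mono_on (by simp) aux_phi_int.integrableOn measurableSet_Icc
    intro x hx
    unfold phi
    obtain ⟨h1, h2⟩ := hx
    apply mul_le_mul_of_nonneg_left _ (by positivity)
    apply Real.exp_le_exp.2
    nlinarith
  have h2 : ∫ t in Set.Icc (-c-1) (-c), phi t ≤ Phi (-c) :=
    setIntegral_mono_set aux_phi_int.integrableOn
      (Eventually.of_forall fun x => (aux_phi_pos x).le)
      (Set.Icc_subset_Iic_self).eventuallyLE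
  have h3 : ∫ t in Set.Icc (-c-1) (-c), phi (c+1) = phi (c+1) := by
    simp
  linarith

lemma aux_phi_le (c : ℝ) (hc : 0 ≤ c) : phi c ≤ Real.exp (c + 1/2) * Phi (-c) := by
  have h := aux_Phi_lower c hc
  have : phi c = Real.exp (c + 1/2) * phi (c+1) := by
    unfold phi
    rw [mul_left_comm, ← Real.exp_add]
    congr 2; ring
  rw [this]
  gcongr

lemma aux_expo (r s c z : ℝ) (hr : 0 < r) (hs : 0 < s) (hs1 : s < 1) (hrs : r^2 + s^2 = 1)
    (hc : 0 ≤ c) (hd : c < (c + r*z)/s) :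
    -((c + r*z)/s)^2/2 + -z^2/2 ≤
      -c^2/2 + (-(((1-s)/r)^2/4)*c^2 + -(1/(4*s^2)) * (z + r*c)^2) := by
  obtain ⟨w, hw⟩ : ∃ w, w = (z + r*c)/s := ⟨_, rfl⟩
  have hz : z = s*w - r*c := by rw [hw]; field_simp; ring
  have hde : (c + r*z)/s = s*c + r*w := by
    rw [hz, div_eq_iff hs.ne']; linear_combination -c*hrs
  rw [hde] at hd ⊢
  have hk : (1-s)/r*c ≤ w := by
    rw [div_mul_eq_mul_div, div_le_iff₀ hr]; nlinarith
  have hk0 : 0 ≤ (1-s)/r*c := by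
    have : 0 < 1 - s := by linarith
    positivity
  have hsq : ((1-s)/r*c)^2 ≤ w^2 := by gcongr
  have e1 : (1/(4*s^2)) * (z + r*c)^2 = w^2/4 := by
    rw [hw]; field_simp
  have e2 : (s*c+r*w)^2 + z^2 = c^2 + w^2 := by
    rw [hz]; linear_combination (c^2+w^2)*hrs
  rw [mul_pow] at hsq
  linarith

lemma aux_phi_phi (r s c z : ℝ) (hr : 0 < r) (hs : 0 < s) (hs1 : s < 1) (hrs : r^2 + s^2 = 1)
    (hc : 0 ≤ c) (hd : c < (c + r*z)/s) :
    phi ((c + r*z)/s) * phi z ≤ phi c * Real.exp (-(((1-s)/r)^2/4)*c^2) *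
      Real.exp (-(1/(4*s^2)) * (z + r*c)^2) := by
  have h := Real.exp_le_exp.2 (aux_expo r s c z hr hs hs1 hrs hc hd)
  rw [Real.exp_add, Real.exp_add, Real.exp_add] at h
  have h1 : (Real.sqrt (2 * Real.pi))⁻¹ ≤ 1 := by
    apply inv_le_one_of_one_le₀
    rw [Real.one_le_sqrt]
    linarith [Real.pi_gt_three]
  have h0 : 0 ≤ (Real.sqrt (2 * Real.pi))⁻¹ := by positivity
  unfold phi
  generalize (Real.sqrt (2 * Real.pi))⁻¹ = k at *
  calc _ = k * (k * (Real.exp (-((c + r * z) / s) ^ 2 / 2) * Real.exp (-z ^ 2 / 2))) := by ring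
    _ ≤ k * (1 * (Real.exp (-((c + r * z) / s) ^ 2 / 2) * Real.exp (-z ^ 2 / 2))) := by gcongr
    _ ≤ k * (1 * (Real.exp (-c^2/2) * (Real.exp (-(((1-s)/r)^2/4)*c^2) *
        Real.exp (-(1/(4*s^2)) * (z + r*c)^2)))) := by
      apply mul_le_mul_of_nonneg_left _ h0
      rw [one_mul, one_mul]; exact h
    _ = _ := by ring

lemma aux_lim (k : ℝ) (hk : 0 < k) (K : ℝ) :
    Tendsto (fun x : ℝ => 2 * x * Real.exp (x + 1/2) * Real.exp (-k * x^2) * K) atTop (nhds 0) := by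
  have h2 : Tendsto (fun x : ℝ => x * (k * x - 2)) atTop atTop :=
    tendsto_id.atTop_mul_atTop₀ (tendsto_atTop_add_const_right _ _ (tendsto_id.const_mul_atTop hk))
  have h3 : Tendsto (fun x : ℝ => Real.exp (-(x * (k * x - 2)))) atTop (nhds 0) :=
    Real.tendsto_exp_neg_atTop_nhds_zero.comp h2
  have h4 := h3.const_mul (2 * Real.exp (1/2))
  rw [mul_zero] at h4
  have h5 : Tendsto (fun x : ℝ => 2 * x * Real.exp (x + 1/2) * Real.exp (-k * x^2))
      atTop (nhds 0) := by
    refine squeeze_zero' ?_ ?_ h4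
    · filter_upwards [eventually_ge_atTop 0] with x hx
      positivity
    · filter_upwards [eventually_ge_atTop 0] with x hx
      have hx1 : x ≤ Real.exp x := by linarith [Real.add_one_le_exp x]
      calc _ ≤ 2 * Real.exp x * Real.exp (x + 1/2) * Real.exp (-k * x^2) := by gcongr
        _ = _ := by
          simp only [mul_assoc, ← Real.exp_add]
          congr 2; ring
  simpa using h5.mul_const K

lemma aux_bound (ρ : ℝ) (hρ : ρ ∈ Set.Ioo (0:ℝ) 1) (c t : ℝ) (n : ℕ) (hc : 0 ≤ c)
    (ht : t ≤ Phi (-c)) :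
    ‖∫ z in {z : ℝ | Phi (-(dd ρ c z)) < t},
            (Phi (dd ρ c z)) ^ (n - 1) * phi (dd ρ c z) * phi z‖ ≤
      phi c * Real.exp (-(((1-√(1-ρ))/√ρ)^2/4)*c^2) *
        ∫ z : ℝ, Real.exp (-(1/(4*(√(1-ρ))^2)) * z^2) := by
  obtain ⟨h0, h1⟩ := hρ
  have hr : 0 < √ρ := Real.sqrt_pos.2 h0
  have hs : 0 < √(1-ρ) := Real.sqrt_pos.2 (by linarith)
  have hrs : √ρ^2 + √(1-ρ)^2 = 1 := by
    rw [Real.sq_sqrt h0.le, Real.sq_sqrt (by linarith)]; ring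
  have hs1 : √(1-ρ) < 1 := by nlinarith
  have hint0 : Integrable (fun z : ℝ => Real.exp (-(1/(4*(√(1-ρ))^2)) * z^2)) :=
    integrable_exp_neg_mul_sq (by positivity)
  have hint := (hint0.comp_add_right (√ρ * c)).const_mul
    (phi c * Real.exp (-(((1-√(1-ρ))/√ρ)^2/4)*c^2))
  rw [← integral_add_right_eq_self (fun z : ℝ => Real.exp (-(1/(4*(√(1-ρ))^2)) * z^2)) (√ρ * c),
    ← integral_const_mul]
  have hms : MeasurableSet {z : ℝ | Phi (-(dd ρ c z)) < t} := by
    apply measurableSet_lt _ measurable_const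
    apply aux_Phi_mono.measurable.comp
    unfold dd
    fun_prop
  refine (norm_integral_le_of_norm_le hint.integrableOn ?_).trans
    (setIntegral_le_integral hint ?_)
  · refine ae_restrict_of_forall_mem hms fun z hz => ?_
    have hlt : Phi (-(dd ρ c z)) < Phi (-c) := lt_of_lt_of_le hz ht
    have hd : c < dd ρ c z := by
      by_contra hcon
      push Not at hcon
      exact absurd (aux_Phi_mono (neg_le_neg hcon)) (not_le.2 hlt)
    have hb := aux_phi_phi _ _ c z hr hs hs1 hrs hc hd
    have hp : Phi (dd ρ c z) ^ (n-1) ≤ 1 := pow_le_one₀ (aux_Phi_nonneg _) (aux_Phi_le_one _)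
    have hp0 : 0 ≤ Phi (dd ρ c z) ^ (n-1) := pow_nonneg (aux_Phi_nonneg _) _
    have a1 := aux_phi_pos (dd ρ c z)
    have a2 := aux_phi_pos z
    rw [Real.norm_of_nonneg (by positivity), mul_assoc]
    refine le_trans ?_ hb
    exact mul_le_of_le_one_left (by positivity) hp
  · have := aux_phi_pos c
    exact Eventually.of_forall fun z => by simp only [Pi.zero_apply]; positivity

theorem integral_region_An_tendsto_zero
    (ρ : ℝ) (hρ : ρ ∈ Set.Ioo (0:ℝ) 1) (α : ℝ) (hα : α ∈ Set.Ioo (0:ℝ) 1)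
    (αseq : ℕ → ℝ) (hαseq : ∀ n, αseq n ∈ Set.Ioo (0:ℝ) 1)
    (hlim : Tendsto (fun n : ℕ => (n : ℝ) * αseq n) atTop (nhds α))
    (c : ℕ → ℝ) (hc : ∀ n, Phi (-(c n)) = αseq n) :
    Tendsto (fun n : ℕ =>
        (n : ℝ) * c n *
          ∫ z in {z : ℝ | Phi (-(dd ρ (c n) z)) < 1 / ((n : ℝ) * (Real.log n) ^ 3)},
            (Phi (dd ρ (c n) z)) ^ (n - 1) * phi (dd ρ (c n) z) * phi z)
      atTop (nhds 0) := by
  have h0 := hρ.1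
  have h1 := hρ.2
  have hr : 0 < √ρ := Real.sqrt_pos.2 h0
  have hs : 0 < √(1-ρ) := Real.sqrt_pos.2 (by linarith)
  have hs1 : √(1-ρ) < 1 := by
    rw [Real.sqrt_lt' one_pos]; linarith
  have hk : 0 < ((1-√(1-ρ))/√ρ)^2/4 := by
    have : 0 < 1 - √(1-ρ) := by linarith
    positivity
  have hinv : Tendsto (fun n : ℕ => ((n : ℝ))⁻¹) atTop (nhds 0) :=
    tendsto_inv_atTop_zero.comp tendsto_natCast_atTop_atTop
  have ha0 : Tendsto αseq atTop (nhds 0) := by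
    have h := hlim.mul hinv
    rw [mul_zero] at h
    refine h.congr' ?_
    filter_upwards [eventually_gt_atTop 0] with n hn
    have : (n : ℝ) ≠ 0 := by positivity
    field_simp
  have hcinf : Tendsto c atTop atTop := by
    rw [tendsto_atTop]
    intro M
    have hpos : 0 < Phi (-(max M 0)) :=
      lt_of_lt_of_le (aux_phi_pos _) (aux_Phi_lower _ (le_max_right _ _))
    filter_upwards [ha0.eventually_lt_const hpos] with n hn
    by_contra hcon
    push Not at hcon
    have := aux_Phi_mono (neg_le_neg (hcon.le.trans (le_max_left M 0)))
    rw [hc n] at this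
    linarith
  have hlog : Tendsto (fun n : ℕ => ((Real.log n)^3)⁻¹) atTop (nhds 0) :=
    tendsto_inv_atTop_zero.comp ((tendsto_pow_atTop (by norm_num)).comp
      (Real.tendsto_log_atTop.comp tendsto_natCast_atTop_atTop))
  refine squeeze_zero_norm' ?_ ((aux_lim _ hk
    (∫ z : ℝ, Real.exp (-(1/(4*(√(1-ρ))^2)) * z^2))).comp hcinf)
  filter_upwards [hcinf.eventually_ge_atTop 0, hlim.eventually_lt_const (hα.2.trans one_lt_two),
    hlog.eventually_lt_const (half_pos hα.1), hlim.eventually_const_lt (half_lt_self hα.1),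
    eventually_gt_atTop 0] with n hcn hn2 hl hl2 hn
  have hn' : (0 : ℝ) < n := by positivity
  have ht : 1 / ((n : ℝ) * (Real.log n) ^ 3) ≤ Phi (-(c n)) := by
    rw [hc n, one_div, mul_inv, ← div_eq_inv_mul, div_le_iff₀ hn']
    linarith
  have hb := aux_bound ρ hρ (c n) _ n hcn ht
  have hphi := aux_phi_le (c n) hcn
  rw [hc n] at hphi
  rw [norm_mul, Real.norm_of_nonneg (by positivity : 0 ≤ (n:ℝ) * c n)]
  have hK : 0 ≤ ∫ z : ℝ, Real.exp (-(1/(4*(√(1-ρ))^2)) * z^2) :=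
    integral_nonneg fun z => (Real.exp_pos _).le
  simp only [Function.comp_apply]
  generalize (∫ z : ℝ, Real.exp (-(1/(4*(√(1-ρ))^2)) * z^2)) = K at *
  generalize Real.exp (-(((1-√(1-ρ))/√ρ)^2/4)*(c n)^2) = E at *
  have hE : 0 ≤ E * K := by
    have := (norm_nonneg _).trans hb
    rw [mul_assoc] at this
    exact nonneg_of_mul_nonneg_right this (aux_phi_pos _)
  calc _ ≤ (n : ℝ) * c n * (phi (c n) * E * K) := by gcongr
    _ = (n : ℝ) * c n * (phi (c n) * (E * K)) := by ring
    _ ≤ (n : ℝ) * c n * (Real.exp (c n + 1/2) * αseq n * (E * K)) := by gcongr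
    _ = (n * αseq n) * (c n * Real.exp (c n + 1/2) * (E * K)) := by ring
    _ ≤ 2 * (c n * Real.exp (c n + 1/2) * (E * K)) := by gcongr
    _ = _ := by ring
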